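/- Let f : (0,1) → ℝ be a bounded convex function. Then the one-sided limit lim_{t→0⁺} f(t) (which exists and is finite since f is bounded and convex) equals the limit, as τ → −∞, of the quantity inf_{t∈(0,1)} (f(t) − τ·t); i.e. lim_{t→0⁺} f(t) = lim_{τ→−∞} inf_{t∈(0,1)} (f(t) − τ·t). (The second limit exists because the map τ ↦ inf_{t∈(0,1)}(f(t) − τ·t) is nonincreasing in τ and bounded above by lim_{t→0⁺} f(t).) -/

import Mathlib

/-!
A convex function on an interval `(a, b)` has monotone secant slopes through any fixed point, so an
upper bound near `a` makes these slopes, and hence the function itself, converge at `a`. The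
supporting line at an interior point bounds the function from below. Finally `-τ * (t - a)` is a
penalty that vanishes only as `t → a`: as `τ → -∞` it pushes near-minimizers towards `a`, and for
a function bounded below the penalized infimum then tends to the limit at `a`.
-/

open Filter Set Topology

section Penalty

variable {α : Type*} {f g : α → ℝ} {L : ℝ}

theorem bddBelow_range_add_mul (hf : BddBelow (range f)) (hg : ∀ x, 0 ≤ g x) {σ : ℝ} (hσ : 0 ≤ σ) :
    BddBelow (range fun x => f x + σ * g x) :=
  hf.range_mono _ fun x => le_add_of_nonneg_right (mul_nonneg hσ (hg x))

theorem iInf_add_mul_le_of_tendsto [(comap g (𝓝 0)).NeBot] (hf : BddBelow (range f))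
    (hg : ∀ x, 0 ≤ g x) (hL : Tendsto f (comap g (𝓝 0)) (𝓝 L)) {σ : ℝ} (hσ : 0 ≤ σ) :
    ⨅ x, (f x + σ * g x) ≤ L := by
  have penalized_tendsto : Tendsto (fun x => f x + σ * g x) (comap g (𝓝 0)) (𝓝 L) := by
    simpa only [mul_zero, add_zero] using hL.add (tendsto_comap.const_mul σ)
  exact ge_of_tendsto' penalized_tendsto (ciInf_le (bddBelow_range_add_mul hf hg hσ))

theorem eventually_le_iInf_add_mul [Nonempty α] (hf : BddBelow (range f)) (hg : ∀ x, 0 ≤ g x)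
    {c : ℝ} (hc : ∀ᶠ x in comap g (𝓝 0), c ≤ f x) :
    ∀ᶠ σ in atTop, c ≤ ⨅ x, (f x + σ * g x) := by
  obtain ⟨m, hm⟩ := hf
  obtain ⟨δ, hδ, hfδ⟩ := (Metric.nhds_basis_ball.comap g).eventually_iff.1 hc
  filter_upwards [eventually_ge_atTop 0, eventually_ge_atTop ((c - m) / δ)] with σ hσ hσδ
  refine le_ciInf fun x => ?_
  rcases lt_or_ge (g x) δ with hgx | hgx
  · have c_le : c ≤ f x := hfδ (by simpa [abs_of_nonneg (hg x)] using hgx)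
    exact le_add_of_le_of_nonneg c_le (mul_nonneg hσ (hg x))
  · calc
      c ≤ m + σ * δ := by linarith [(div_le_iff₀ hδ).1 hσδ]
      _ ≤ f x + σ * g x := by gcongr; exact hm (mem_range_self x)

theorem tendsto_iInf_add_mul_atTop [(comap g (𝓝 0)).NeBot] (hf : BddBelow (range f))
    (hg : ∀ x, 0 ≤ g x) (hL : Tendsto f (comap g (𝓝 0)) (𝓝 L)) :
    Tendsto (fun σ => ⨅ x, (f x + σ * g x)) atTop (𝓝 L) := by
  have : Nonempty α := nonempty_of_neBot (comap g (𝓝 0))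
  refine tendsto_order.2 ⟨fun l hl => ?_, fun u hu => ?_⟩
  · obtain ⟨c, hlc, hcL⟩ := exists_between hl
    exact (eventually_le_iInf_add_mul hf hg (hL.eventually_const_le hcL)).mono
      fun σ hσ => hlc.trans_le hσ
  · filter_upwards [eventually_ge_atTop 0] with σ hσ
    exact (iInf_add_mul_le_of_tendsto hf hg hL hσ).trans_lt hu

end Penalty

theorem tendsto_iInf_sub_mul_sub_atBot {s : Set ℝ} {f : ℝ → ℝ} {a L : ℝ} (hs : s ⊆ Ici a)
    (ha : a ∈ closure s) (hf : BddBelow (f '' s)) (hL : Tendsto f (𝓝[s] a) (𝓝 L)) :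
    Tendsto (fun τ : ℝ => ⨅ t : s, (f t - τ * (t - a))) atBot (𝓝 L) := by
  have comap_coe_sub : comap (fun t : s => (t : ℝ) - a) (𝓝 0) = comap (↑) (𝓝 a) := by
    have comap_sub_const : comap (fun t => t - a) (𝓝 0) = 𝓝 a := by
      simpa using (Homeomorph.subRight a).comap_nhds_eq 0
    rw [← comap_sub_const, comap_comap, Function.comp_def]
  have : (comap (fun t : s => (t : ℝ) - a) (𝓝 0)).NeBot :=
    comap_coe_sub ▸ mem_closure_iff_comap_neBot.1 ha
  have tendsto_restrict : Tendsto (fun t : s => f t) (comap (fun t : s => (t : ℝ) - a) (𝓝 0))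
      (𝓝 L) := by
    rwa [comap_coe_sub, ← Function.comp_def, ← tendsto_map'_iff, map_comap_setCoe_val]
  have tendsto_atTop := tendsto_iInf_add_mul_atTop (image_eq_range f s ▸ hf)
    (fun t => sub_nonneg.2 (hs t.2)) tendsto_restrict
  simpa only [Function.comp_def, neg_mul, ← sub_eq_add_neg] using
    tendsto_atTop.comp tendsto_neg_atBot_atTop

section Convex

variable {f : ℝ → ℝ} {S : Set ℝ} {a b x y : ℝ}

theorem add_rightDeriv_mul_sub_le_of_convexOn (hf : ConvexOn ℝ S f) (hx : x ∈ interior S)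
    (hy : y ∈ S) : f x + derivWithin f (Ioi x) x * (y - x) ≤ f y := by
  rcases lt_trichotomy x y with hxy | rfl | hyx
  · have slope_ge := hf.rightDeriv_le_slope_of_mem_interior hx hy hxy
    rw [slope_def_field, le_div_iff₀ (sub_pos.2 hxy)] at slope_ge
    linarith
  · simp
  · have slope_le := (hf.slope_le_leftDeriv_of_mem_interior hy hx hyx).trans
      (hf.leftDeriv_le_rightDeriv_of_mem_interior hx)
    rw [slope_def_field, div_le_iff₀ (sub_pos.2 hyx)] at slope_le
    linarith

theorem bddBelow_image_of_convexOn (hf : ConvexOn ℝ S f) (hS : Bornology.IsBounded S) :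
    BddBelow (f '' S) := by
  rcases S.subsingleton_or_nontrivial with hS' | hS'
  · exact (hS'.finite.image f).bddBelow
  obtain ⟨x, hx⟩ := hf.1.nontrivial_iff_nonempty_interior.1 hS'
  have bddBelow_line : BddBelow ((fun y => f x + derivWithin f (Ioi x) x * (y - x)) '' closure S) :=
    hS.isCompact_closure.bddBelow_image (by fun_prop)
  obtain ⟨m, hm⟩ := bddBelow_line
  refine ⟨m, forall_mem_image.2 fun y hy => ?_⟩
  exact (hm (mem_image_of_mem _ (subset_closure hy))).trans
    (add_rightDeriv_mul_sub_le_of_convexOn hf hx hy)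

theorem bddBelow_slope_image_Ioo_of_bddAbove (hf : BddAbove (f '' Ioo a x)) (hxy : x < y) :
    BddBelow (slope f y '' Ioo a x) := by
  obtain ⟨M, hM⟩ := hf
  refine ⟨-((|M| + |f y|) / (y - x)), forall_mem_image.2 fun t ht => ?_⟩
  have f_le : f t ≤ M := hM (mem_image_of_mem f ht)
  rw [slope_comm, slope_def_field, neg_le, ← neg_div, neg_sub]
  gcongr
  · linarith [le_abs_self M, neg_abs_le (f y)]
  · exact ht.2.le

theorem exists_tendsto_nhdsGT_of_convexOn_Ioo (hab : a < b) (hf : ConvexOn ℝ (Ioo a b) f)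
    (hbdd : IsBoundedUnder (· ≤ ·) (𝓝[>] a) f) : ∃ L, Tendsto f (𝓝[>] a) (𝓝 L) := by
  obtain ⟨M, hM⟩ := hbdd.eventually_le
  obtain ⟨d, had, hd⟩ := mem_nhdsGT_iff_exists_Ioo_subset.1 hM
  obtain ⟨x, hax, hx⟩ := exists_between (lt_min had hab)
  obtain ⟨hxd, hxb⟩ := lt_min_iff.1 hx
  obtain ⟨y, hxy, hyb⟩ := exists_between hxb
  have slope_monotoneOn : MonotoneOn (slope f y) (Ioo a x) :=
    (hf.monotoneOn_slope_lt ⟨hax.trans hxy, hyb⟩).mono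
      fun t ht => ⟨⟨ht.1, ht.2.trans hxb⟩, ht.2.trans hxy⟩
  have f_bddAbove : BddAbove (f '' Ioo a x) :=
    ⟨M, forall_mem_image.2 fun t ht => hd ⟨ht.1, ht.2.trans hxd⟩⟩
  have slope_tendsto := slope_monotoneOn.tendsto_nhdsWithin_Ioo_right (nonempty_Ioo.2 hax)
    (bddBelow_slope_image_Ioo_of_bddAbove f_bddAbove hxy)
  have sub_tendsto : Tendsto (fun t => t - y) (𝓝[>] a) (𝓝 (a - y)) :=
    (continuous_sub_right y).continuousWithinAt
  refine ⟨_, ((sub_tendsto.smul slope_tendsto).add_const (f y)).congr fun t => ?_⟩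
  exact sub_smul_slope_vadd f y t

end Convex

theorem convex_bounded_right_limit_eq_limit_of_inf_general {f : ℝ → ℝ} {a b : ℝ} (hab : a < b)
    (hconv : ConvexOn ℝ (Ioo a b) f) (hbdd : IsBoundedUnder (· ≤ ·) (𝓝[>] a) f) :
    ∃ L : ℝ, Tendsto f (𝓝[>] a) (𝓝 L) ∧
      Tendsto (fun τ : ℝ => ⨅ t : Ioo a b, (f t - τ * (t - a))) atBot (𝓝 L) := by
  obtain ⟨L, hL⟩ := exists_tendsto_nhdsGT_of_convexOn_Ioo hab hconv hbdd
  refine ⟨L, hL, tendsto_iInf_sub_mul_sub_atBot (fun t ht => ht.1.le) ?_ ?_ ?_⟩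
  · rw [closure_Ioo hab.ne]
    exact left_mem_Icc.2 hab.le
  · exact bddBelow_image_of_convexOn hconv (Metric.isBounded_Ioo a b)
  · rwa [nhdsWithin_Ioo_eq_nhdsGT hab]

/-- **Lemma 5.1.** If `f : (0,1) → ℝ` is a bounded convex function, then the one-sided
limit `lim_{t→0⁺} f(t)` exists and equals
`lim_{τ→−∞} inf_{t∈(0,1)} (f(t) − τ·t)`. -/
theorem convex_bounded_right_limit_eq_limit_of_inf
    (f : ℝ → ℝ)
    (hconv : ConvexOn ℝ (Set.Ioo (0:ℝ) 1) f)
    (hbdd : ∃ M : ℝ, ∀ t ∈ Set.Ioo (0:ℝ) 1, |f t| ≤ M) :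
    ∃ L : ℝ,
      Filter.Tendsto f (nhdsWithin 0 (Set.Ioo (0:ℝ) 1)) (nhds L) ∧
      Filter.Tendsto (fun τ : ℝ => ⨅ t : Set.Ioo (0:ℝ) 1, (f t - τ * t))
        Filter.atBot (nhds L) := by
  obtain ⟨M, hM⟩ := hbdd
  have f_bounded : IsBoundedUnder (· ≤ ·) (𝓝[>] 0) f :=
    isBoundedUnder_of_eventually_le <|
      mem_of_superset (Ioo_mem_nhdsGT one_pos) fun t ht => le_of_abs_le (hM t ht)
  simpa only [nhdsWithin_Ioo_eq_nhdsGT one_pos, sub_zero] using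
    convex_bounded_right_limit_eq_limit_of_inf_general one_pos hconv f_bounded
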